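/- Let w, v ∈ ℝ^N and let B be a real N_p×N matrix. Suppose χ₁ ∈ [0,1] satisfies the energy constraint ‖(1-χ₁)·w + χ₁·v‖² ≤ ‖w‖², and χ₂ ∈ [0,1] satisfies the enstrophy constraint ‖B·((1-χ₂)·w + χ₂·v)‖² ≤ ‖B·w‖². Then χ = min(χ₁, χ₂) lies in [0,1] and simultaneously satisfies both constraints: ‖(1-χ)·w + χ·v‖² ≤ ‖w‖² and ‖B·((1-χ)·w + χ·v)‖² ≤ ‖B·w‖². -/

import Mathlib

/-!
A constraint `f u ≤ f w` with `f` quasiconvex confines `u` to a convex set `K` containing `w`. The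
parameters `χ` for which `(1 - χ) • w + χ • v` lies in `K` then form an interval containing `0`, so
decreasing an admissible `χ ≥ 0` towards `0` keeps it admissible.
-/

open Set

section Relaxation

variable {𝕜 E : Type*} [Field 𝕜] [LinearOrder 𝕜] [IsStrictOrderedRing 𝕜]
  [AddCommGroup E] [Module 𝕜 E] {w v : E}

theorem relaxation_mem_of_convex_of_le {K : Set E} (hK : Convex 𝕜 K) (hw : w ∈ K)
    {a c : 𝕜} (ha : (1 - a) • w + a • v ∈ K) (hc : 0 ≤ c) (hca : c ≤ a) :
    (1 - c) • w + c • v ∈ K := by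
  simp only [← AffineMap.lineMap_apply_module] at ha ⊢
  have admissible_ordConnected : (AffineMap.lineMap w v ⁻¹' K : Set 𝕜).OrdConnected :=
    (hK.affine_preimage (AffineMap.lineMap w v)).ordConnected
  have zero_admissible : (0 : 𝕜) ∈ AffineMap.lineMap w v ⁻¹' K := by
    simpa only [mem_preimage, AffineMap.lineMap_apply_zero] using hw
  exact admissible_ordConnected.out zero_admissible ha ⟨hc, hca⟩

theorem relaxation_le_of_quasiconvexOn_of_le {β : Type*} [Preorder β] {f : E → β}
    (hf : QuasiconvexOn 𝕜 univ f) {a c : 𝕜} (ha : f ((1 - a) • w + a • v) ≤ f w)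
    (hc : 0 ≤ c) (hca : c ≤ a) :
    f ((1 - c) • w + c • v) ≤ f w :=
  (relaxation_mem_of_convex_of_le (hf (f w)) ⟨mem_univ w, le_rfl⟩ ⟨mem_univ _, ha⟩ hc hca).2

theorem min_relaxation_satisfies_both_constraints_general {β γ : Type*} [Preorder β] [Preorder γ]
    {f : E → β} {g : E → γ} (hf : QuasiconvexOn 𝕜 univ f) (hg : QuasiconvexOn 𝕜 univ g)
    {χ₁ χ₂ : 𝕜} (h₁0 : 0 ≤ χ₁) (h₁1 : χ₁ ≤ 1) (h₂0 : 0 ≤ χ₂)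
    (hχ₁ : f ((1 - χ₁) • w + χ₁ • v) ≤ f w) (hχ₂ : g ((1 - χ₂) • w + χ₂ • v) ≤ g w) :
    (0 ≤ min χ₁ χ₂ ∧ min χ₁ χ₂ ≤ 1) ∧
      f ((1 - min χ₁ χ₂) • w + min χ₁ χ₂ • v) ≤ f w ∧
      g ((1 - min χ₁ χ₂) • w + min χ₁ χ₂ • v) ≤ g w :=
  have min_nonneg : 0 ≤ min χ₁ χ₂ := le_min h₁0 h₂0
  ⟨⟨min_nonneg, min_le_of_left_le h₁1⟩,
    relaxation_le_of_quasiconvexOn_of_le hf hχ₁ min_nonneg (min_le_left χ₁ χ₂),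
    relaxation_le_of_quasiconvexOn_of_le hg hχ₂ min_nonneg (min_le_right χ₁ χ₂)⟩

end Relaxation

theorem convexOn_norm_sq_comp_linearMap {E F : Type*} [AddCommGroup E] [Module ℝ E]
    [SeminormedAddCommGroup F] [NormedSpace ℝ F] (T : E →ₗ[ℝ] F) :
    ConvexOn ℝ univ fun u ↦ ‖T u‖ ^ 2 :=
  (convexOn_univ_norm.comp_linearMap T).pow (fun _ _ ↦ norm_nonneg _) 2

/-- If `χ₁ ∈ [0,1]` satisfies the energy constraint and
`χ₂ ∈ [0,1]` satisfies the enstrophy constraint, then `χ = min χ₁ χ₂` lies in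
`[0,1]` and simultaneously satisfies both constraints. -/
theorem min_relaxation_satisfies_both_constraints {N Np : ℕ}
    (w v : EuclideanSpace ℝ (Fin N)) (B : Matrix (Fin Np) (Fin N) ℝ)
    (χ₁ χ₂ : ℝ) (h₁0 : 0 ≤ χ₁) (h₁1 : χ₁ ≤ 1) (h₂0 : 0 ≤ χ₂) (h₂1 : χ₂ ≤ 1)
    (hE : ‖(1 - χ₁) • w + χ₁ • v‖ ^ 2 ≤ ‖w‖ ^ 2)
    (hZ : ‖Matrix.toEuclideanLin B ((1 - χ₂) • w + χ₂ • v)‖ ^ 2 ≤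
      ‖Matrix.toEuclideanLin B w‖ ^ 2) :
    (0 ≤ min χ₁ χ₂ ∧ min χ₁ χ₂ ≤ 1) ∧
      ‖(1 - min χ₁ χ₂) • w + min χ₁ χ₂ • v‖ ^ 2 ≤ ‖w‖ ^ 2 ∧
      ‖Matrix.toEuclideanLin B ((1 - min χ₁ χ₂) • w + min χ₁ χ₂ • v)‖ ^ 2 ≤
        ‖Matrix.toEuclideanLin B w‖ ^ 2 := by
  exact min_relaxation_satisfies_both_constraints_general
    (convexOn_norm_sq_comp_linearMap LinearMap.id).quasiconvexOn
    (convexOn_norm_sq_comp_linearMap (Matrix.toEuclideanLin B)).quasiconvexOn h₁0 h₁1 h₂0 hE hZ
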